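/- Suppose α₁, α₂, α₃ are not vertices of an equilateral triangle. Then for every z ∈ ℂ such that z(α₁e₁+α₂e₂+α₃e₃)+(α₁e₂+α₂e₁+α₃e₃) ≠ 0, −z(α₁e₁+α₂e₂+α₃e₃)+(α₁e₂+α₂e₁+α₃e₃) ≠ 0, and 2(a²−3b)W(z) + (ab−9c) ≠ 0, one has G(W(z)) = W(−z). -/

import Mathlib

/-!
Put `P = α₁e₁ + α₂e₂ + α₃e₃` and `Q = α₁e₂ + α₂e₁ + α₃e₃`, and let `p`, `q` be the same expressions
in the products `α₂α₃`, `α₁α₃`, `α₁α₂`. Then `W z = -(pz + q) / (Pz + Q)`. The product `PQ` is a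
symmetric quadratic form in the roots, which together with its polarization gives
`(a² - 3b) w² + (ab - 9c) w + (b² - 3ca) = (Pw + p) (Qw + q)`. The equation `G w = w` says that this
quadratic vanishes, so `G` is the Möbius involution with fixed points `W ∞ = -p / P` and
`W 0 = -q / Q`, that is, the conjugate by `W` of the involution `z ↦ -z`.
-/

section Resolvent

variable {R : Type*} [CommRing R]

/-- The Lagrange resolvent `ω x₁ + ω² x₂ + x₃`, up to sign, where `e₁ = -ω` and `e₂ = -ω²` are the
cube roots of `-1` other than `-1`; exchanging `e₁` and `e₂` gives the conjugate resolvent. -/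
def lagrangeResolvent (e₁ e₂ x₁ x₂ x₃ : R) : R :=
  x₁ * e₁ + x₂ * e₂ - x₃

variable {e₁ e₂ : R}

theorem lagrangeResolvent_mul_swap (hadd : e₁ + e₂ = 1) (hmul : e₁ * e₂ = 1) (x₁ x₂ x₃ : R) :
    lagrangeResolvent e₁ e₂ x₁ x₂ x₃ * lagrangeResolvent e₂ e₁ x₁ x₂ x₃ =
      (x₁ + x₂ + x₃) ^ 2 - 3 * (x₁ * x₂ + x₁ * x₃ + x₂ * x₃) := by
  unfold lagrangeResolvent
  linear_combination (x₁ ^ 2 + x₂ ^ 2 - 2 * x₁ * x₂) * hmul +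
    (x₁ * x₂ * (e₁ + e₂ + 1) - x₁ * x₃ - x₂ * x₃) * hadd

theorem lagrangeResolvent_swap_mul_add_mul_swap (hadd : e₁ + e₂ = 1) (hmul : e₁ * e₂ = 1)
    (x₁ x₂ x₃ y₁ y₂ y₃ : R) :
    lagrangeResolvent e₂ e₁ y₁ y₂ y₃ * lagrangeResolvent e₁ e₂ x₁ x₂ x₃ +
        lagrangeResolvent e₁ e₂ y₁ y₂ y₃ * lagrangeResolvent e₂ e₁ x₁ x₂ x₃ =
      3 * (x₁ * y₁ + x₂ * y₂ + x₃ * y₃) - (x₁ + x₂ + x₃) * (y₁ + y₂ + y₃) := by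
  unfold lagrangeResolvent
  linear_combination (2 * x₁ * y₁ + 2 * x₂ * y₂ - 2 * x₁ * y₂ - 2 * x₂ * y₁) * hmul +
    ((x₁ * y₂ + x₂ * y₁) * (e₁ + e₂ + 1) - x₁ * y₃ - x₃ * y₁ - x₂ * y₃ - x₃ * y₂) * hadd

end Resolvent

section Involution

variable {K : Type*} [Field K]

theorem involution_moebius_eq_moebius_neg {p q r s z w : K} (hz : z * r + s ≠ 0)
    (hw : w = -((z * p + q) / (z * r + s)))
    (hden : 2 * (r * s) * w + (q * r + p * s) ≠ 0) :
    -(((q * r + p * s) * w + 2 * (p * q)) / (2 * (r * s) * w + (q * r + p * s))) =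
      -((-z * p + q) / (-z * r + s)) := by
  have hw_mul : w * (z * r + s) = -(z * p + q) := by
    rw [hw, neg_mul, div_mul_cancel₀ _ hz]
  have hnum_eq : (q * r + p * s) * w + 2 * (p * q) =
      (p * s - q * r) * (-z * p + q) / (z * r + s) := by
    rw [eq_div_iff hz]
    linear_combination (q * r + p * s) * hw_mul
  have hden_eq : 2 * (r * s) * w + (q * r + p * s) =
      (p * s - q * r) * (-z * r + s) / (z * r + s) := by
    rw [eq_div_iff hz]
    linear_combination 2 * (r * s) * hw_mul
  have hdet : p * s - q * r ≠ 0 := by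
    intro hdet
    exact hden (by rw [hden_eq, hdet, zero_mul, zero_div])
  rw [hnum_eq, hden_eq, div_div_div_cancel_right₀ hz, mul_div_mul_left _ _ hdet]

theorem stmt_16_general {α₁ α₂ α₃ e₁ e₂ e₃ a b c : K} {W G : K → K}
    (hadd : e₁ + e₂ = 1) (hmul : e₁ * e₂ = 1) (he₃ : e₃ = -1)
    (ha : a = -(α₁ + α₂ + α₃))
    (hb : b = α₁ * α₂ + α₁ * α₃ + α₂ * α₃)
    (hc : c = -(α₁ * α₂ * α₃))
    (hW : ∀ z, W z =
      -((z * (α₁ * α₂ * e₃ + α₁ * α₃ * e₂ + α₂ * α₃ * e₁) +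
          (α₁ * α₂ * e₃ + α₁ * α₃ * e₁ + α₂ * α₃ * e₂)) /
        (z * (α₁ * e₁ + α₂ * e₂ + α₃ * e₃) + (α₁ * e₂ + α₂ * e₁ + α₃ * e₃))))
    (hG : ∀ z, G z = -(((a * b - 9 * c) * z + 2 * (b ^ 2 - 3 * c * a)) /
      (2 * (a ^ 2 - 3 * b) * z + (a * b - 9 * c))))
    (z : K)
    (hz : z * (α₁ * e₁ + α₂ * e₂ + α₃ * e₃) + (α₁ * e₂ + α₂ * e₁ + α₃ * e₃) ≠ 0)
    (hden : 2 * (a ^ 2 - 3 * b) * W z + (a * b - 9 * c) ≠ 0) :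
    G (W z) = W (-z) := by
  set P := α₁ * e₁ + α₂ * e₂ + α₃ * e₃ with hP
  set Q := α₁ * e₂ + α₂ * e₁ + α₃ * e₃ with hQ
  set p := α₁ * α₂ * e₃ + α₁ * α₃ * e₂ + α₂ * α₃ * e₁ with hp
  set q := α₁ * α₂ * e₃ + α₁ * α₃ * e₁ + α₂ * α₃ * e₂ with hq
  have hP_res : P = lagrangeResolvent e₁ e₂ α₁ α₂ α₃ := by rw [hP, he₃, lagrangeResolvent]; ring
  have hQ_res : Q = lagrangeResolvent e₂ e₁ α₁ α₂ α₃ := by rw [hQ, he₃, lagrangeResolvent]; ring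
  have hp_res : p = lagrangeResolvent e₁ e₂ (α₂ * α₃) (α₁ * α₃) (α₁ * α₂) := by
    rw [hp, he₃, lagrangeResolvent]; ring
  have hq_res : q = lagrangeResolvent e₂ e₁ (α₂ * α₃) (α₁ * α₃) (α₁ * α₂) := by
    rw [hq, he₃, lagrangeResolvent]; ring
  have hPQ : a ^ 2 - 3 * b = P * Q := by
    rw [hP_res, hQ_res, lagrangeResolvent_mul_swap hadd hmul, ha, hb]; ring
  have hpq : b ^ 2 - 3 * c * a = p * q := by
    rw [hp_res, hq_res, lagrangeResolvent_mul_swap hadd hmul, ha, hb, hc]; ring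
  have hqP_add_pQ : a * b - 9 * c = q * P + p * Q := by
    rw [hP_res, hQ_res, hp_res, hq_res, lagrangeResolvent_swap_mul_add_mul_swap hadd hmul,
      ha, hb, hc]
    ring
  rw [hPQ, hqP_add_pQ] at hden
  rw [hG, hW (-z), hPQ, hpq, hqP_add_pQ]
  exact involution_moebius_eq_moebius_neg hz (hW z) hden

end Involution

theorem exp_neg_pi_div_three_mul_I_add_exp_pi_div_three_mul_I :
    Complex.exp (-(Real.pi : ℂ) / 3 * Complex.I) + Complex.exp ((Real.pi : ℂ) / 3 * Complex.I) =
      1 := by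
  have hcos : Complex.cos ((Real.pi : ℂ) / 3) = 1 / 2 := by
    rw [← Complex.ofReal_ofNat, ← Complex.ofReal_div, ← Complex.ofReal_cos,
      Real.cos_pi_div_three, Complex.ofReal_div, Complex.ofReal_one, Complex.ofReal_ofNat]
  rw [neg_div, add_comm, ← Complex.two_cos, hcos]
  norm_num

theorem exp_neg_pi_div_three_mul_I_mul_exp_pi_div_three_mul_I :
    Complex.exp (-(Real.pi : ℂ) / 3 * Complex.I) * Complex.exp ((Real.pi : ℂ) / 3 * Complex.I) =
      1 := by
  rw [neg_div, neg_mul, ← Complex.exp_add, neg_add_cancel, Complex.exp_zero]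

theorem stmt_16 (α₁ α₂ α₃ e₁ e₂ e₃ a b c : ℂ) (W G : ℂ → ℂ)
    (he₁ : e₁ = Complex.exp (-(Real.pi : ℂ) / 3 * Complex.I))
    (he₂ : e₂ = Complex.exp ((Real.pi : ℂ) / 3 * Complex.I))
    (he₃ : e₃ = -1)
    (h12 : α₁ ≠ α₂) (h13 : α₁ ≠ α₃) (h23 : α₂ ≠ α₃)
    (ha : a = -(α₁ + α₂ + α₃))
    (hb : b = α₁ * α₂ + α₁ * α₃ + α₂ * α₃)
    (hc : c = -(α₁ * α₂ * α₃))
    (hW : ∀ z, W z =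
      -((z * (α₁ * α₂ * e₃ + α₁ * α₃ * e₂ + α₂ * α₃ * e₁) +
          (α₁ * α₂ * e₃ + α₁ * α₃ * e₁ + α₂ * α₃ * e₂)) /
        (z * (α₁ * e₁ + α₂ * e₂ + α₃ * e₃) + (α₁ * e₂ + α₂ * e₁ + α₃ * e₃))))
    (hG : ∀ z, G z = -(((a * b - 9 * c) * z + 2 * (b ^ 2 - 3 * c * a)) /
      (2 * (a ^ 2 - 3 * b) * z + (a * b - 9 * c))))
    (hne₁ : α₁ * e₁ + α₂ * e₂ + α₃ * e₃ ≠ 0)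
    (hne₂ : α₁ * e₂ + α₂ * e₁ + α₃ * e₃ ≠ 0) :
    ∀ z : ℂ,
      z * (α₁ * e₁ + α₂ * e₂ + α₃ * e₃) + (α₁ * e₂ + α₂ * e₁ + α₃ * e₃) ≠ 0 →
      -z * (α₁ * e₁ + α₂ * e₂ + α₃ * e₃) + (α₁ * e₂ + α₂ * e₁ + α₃ * e₃) ≠ 0 →
      2 * (a ^ 2 - 3 * b) * W z + (a * b - 9 * c) ≠ 0 →
      G (W z) = W (-z) := by
  subst he₁ he₂
  exact fun z hz _ hden ↦ stmt_16_general exp_neg_pi_div_three_mul_I_add_exp_pi_div_three_mul_I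
    exp_neg_pi_div_three_mul_I_mul_exp_pi_div_three_mul_I he₃ ha hb hc hW hG z hz hden
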